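/- For all integers n ≥ 1 and k ≥ 0 the moments of the normalized volume satisfy the recurrence E[V_n^k] = (2n/((n+k)(n+k+1))) · Σ_{ℓ=0}^{k} Σ_{m=0}^{n−1} (C(n−1,m)·C(k,ℓ)/C(n+k,m+ℓ)) · E[V_m^ℓ], where by convention E[V_0^0] = 1 and E[V_0^ℓ] = 0 for ℓ ≥ 1. -/

import Mathlib

open MeasureTheory

noncomputable section

/-- The triangle with vertices (0,0), (1,0), (0,1). -/
def T : Set (ℝ × ℝ) := convexHull ℝ {(0, 0), (1, 0), (0, 1)}

/-- The uniform distribution on `T`: twice Lebesgue measure restricted to `T`. -/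
def μT : Measure (ℝ × ℝ) := (2 : ENNReal) • (volume.restrict T)

/-- Joint law of `n` independent uniform points in `T`. -/
def P (n : ℕ) : Measure (Fin n → ℝ × ℝ) := Measure.pi fun _ => μT

/-- The random convex chain: convex hull of the points together with `(1,0)` and `(0,1)`. -/
def Tchain (n : ℕ) (ω : Fin n → ℝ × ℝ) : Set (ℝ × ℝ) :=
  convexHull ℝ (Set.range ω ∪ {(1, 0), (0, 1)})

/-- Normalized area `V_n = 2 vol(T_n)`. -/
def V (n : ℕ) (ω : Fin n → ℝ × ℝ) : ℝ := 2 * (volume (Tchain n ω)).toReal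

/-- Number of vertices of `T_n` other than the two corners. -/
def N (n : ℕ) (ω : Fin n → ℝ × ℝ) : ℕ :=
  (Set.extremePoints ℝ (Tchain n ω)).ncard - 2

/-- Normalized moments `q_{n,k} = C(n+k,k) E[V_n^k]`. -/
def q (n k : ℕ) : ℝ := ((n + k).choose k : ℝ) * ∫ ω, (V n ω) ^ k ∂ P n

/-- Probability generating function of `N_n`. -/
def G (n : ℕ) (t : ℝ) : ℝ := ∫ ω, t ^ (N n ω) ∂ P n

/-- Harmonic number. -/
def H (j : ℕ) : ℝ := ∑ i ∈ Finset.range j, 1 / ((i : ℝ) + 1)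

/-- Generalized harmonic number of order 2. -/
def H2 (j : ℕ) : ℝ := ∑ i ∈ Finset.range j, 1 / ((i : ℝ) + 1) ^ 2

/-- `c(k,ℓ)`: elementary symmetric polynomial `e_k` of `2/(j(j+1))`, `j = 1,…,ℓ`. -/
def c (k l : ℕ) : ℝ :=
  ∑ S ∈ (Finset.Icc 1 l).powersetCard k, ∏ j ∈ S, 2 / ((j : ℝ) * ((j : ℝ) + 1))


theorem aux_e_apply {X : Type} [MeasurableSpace X] (N : ℕ) (i : Fin (N + 1)) (ω : Fin (N + 1) → X) :
    MeasurableEquiv.piFinSuccAbove (fun _ : Fin (N + 1) => X) i ω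
      = (ω i, fun j => ω (i.succAbove j)) := rfl

/-- peeling off the first point -/
theorem aux_peel {X : Type} [MeasurableSpace X] (μ : Measure X) [IsFiniteMeasure μ]
    (F : Set X → ENNReal) (N : ℕ)
    (hF : Measurable fun ω : Fin (N + 1) → X => F (Set.range ω)) :
    (Measurable fun z : X × (Fin N → X) => F (insert z.1 (Set.range z.2))) ∧
    ∫⁻ ω : Fin (N + 1) → X, F (Set.range ω) ∂(Measure.pi fun _ => μ)
      = ∫⁻ x, ∫⁻ ω : Fin N → X, F (insert x (Set.range ω)) ∂(Measure.pi fun _ => μ) ∂μ := by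
  have h1 := measurePreserving_piFinSuccAbove (fun _ : Fin (N + 1) => μ) 0
  have hm : Measurable fun z : X × (Fin N → X) => F (insert z.1 (Set.range z.2)) := by
    have := hF.comp (MeasurableEquiv.piFinSuccAbove (fun _ : Fin (N + 1) => X) 0).symm.measurable
    convert this using 2 with z
    simp only [Function.comp]
    congr 1
    have : (MeasurableEquiv.piFinSuccAbove (fun _ : Fin (N + 1) => X) 0).symm z
        = Fin.cons z.1 z.2 := by
      simp [MeasurableEquiv.piFinSuccAbove]; rfl
    rw [this, Fin.range_cons]
  refine ⟨hm, ?_⟩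
  rw [← lintegral_prod _ hm.aemeasurable]
  rw [← h1.lintegral_comp hm]
  refine lintegral_congr fun ω => ?_
  congr 1
  ext y
  simp [MeasurableEquiv.piFinSuccAbove, Fin.exists_fin_succ, eq_comm, Fin.tail]

/-- binomial splitting of the points by membership in `B` -/
theorem aux_binom {X : Type} [MeasurableSpace X] (μ : Measure X) [IsFiniteMeasure μ]
    (B : Set X) (hB : MeasurableSet B) (N : ℕ) : ∀ (F : Set X → ENNReal)
    (_hF : ∀ n, Measurable fun ω : Fin n → X => F (Set.range ω))
    (_hFB : ∀ᵐ x ∂μ, x ∉ B → ∀ S, F (insert x S) = F S),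
    ∫⁻ ω : Fin N → X, F (Set.range ω) ∂(Measure.pi fun _ => μ)
      = ∑ m ∈ Finset.range (N + 1), (N.choose m : ENNReal) * (μ Bᶜ) ^ (N - m) *
        ∫⁻ ω : Fin m → X, F (Set.range ω) ∂(Measure.pi fun _ => μ.restrict B) := by
  induction N with
  | zero =>
    intro F hF hFB
    simp
  | succ N ih =>
    intro F hF hFB
    rw [(aux_peel μ F N (hF (N + 1))).2, ← lintegral_add_compl _ hB]
    have e1 : ∫⁻ x in Bᶜ, ∫⁻ ω : Fin N → X, F (insert x (Set.range ω)) ∂(Measure.pi fun _ => μ) ∂μ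
        = μ Bᶜ * ∫⁻ ω : Fin N → X, F (Set.range ω) ∂(Measure.pi fun _ => μ) := by
      rw [mul_comm, ← setLIntegral_const]
      refine setLIntegral_congr_fun_ae hB.compl ?_
      filter_upwards [hFB] with x hx hxB
      simp [hx hxB]
    have e2 : ∫⁻ x in B, ∫⁻ ω : Fin N → X, F (insert x (Set.range ω)) ∂(Measure.pi fun _ => μ) ∂μ
        = ∑ m ∈ Finset.range (N + 1), (N.choose m : ENNReal) * (μ Bᶜ) ^ (N - m) *
        ∫⁻ ω : Fin (m + 1) → X, F (Set.range ω) ∂(Measure.pi fun _ => μ.restrict B) := by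
      have hm := fun m => (aux_peel (μ.restrict B) F m (hF (m + 1)))
      simp_rw [(hm _).2]
      simp_rw [← lintegral_const_mul _ (Measurable.lintegral_prod_right' (hm _).1)]
      rw [← lintegral_finsetSum]
      · refine lintegral_congr fun x => ?_
        refine ih (fun S => F (insert x S)) (fun n => ?_) ?_
        · have := (hm n).1.comp (measurable_prodMk_left (x := x))
          exact this
        · filter_upwards [hFB] with y hy hyB S
          rw [Set.insert_comm, hy hyB]
      · intro m _
        exact (Measurable.lintegral_prod_right' (hm _).1).const_mul _
    rw [e1, e2, ih F hF hFB]
    set J := fun m => ∫⁻ ω : Fin m → X, F (Set.range ω) ∂(Measure.pi fun _ => μ.restrict B) with hJ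
    set a := μ Bᶜ
    change ∑ m ∈ Finset.range (N + 1), (N.choose m : ENNReal) * a ^ (N - m) * J (m + 1) +
      a * ∑ m ∈ Finset.range (N + 1), (N.choose m : ENNReal) * a ^ (N - m) * J m =
      ∑ m ∈ Finset.range (N + 1 + 1), ((N + 1).choose m : ENNReal) * a ^ (N + 1 - m) * J m
    rw [Finset.sum_range_succ' _ (N + 1)]
    simp_rw [Nat.choose_succ_succ, Nat.cast_add, add_mul, Finset.sum_add_distrib, Nat.add_sub_add_right]
    rw [add_assoc]
    congr 1
    rw [Finset.mul_sum, Finset.sum_range_succ', Finset.sum_range_succ _ N]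
    simp only [Nat.choose_succ_self, Nat.cast_zero, zero_mul, add_zero]
    congr 1
    · refine Finset.sum_congr rfl fun m hm => ?_
      have : N - m = (N - (m + 1)) + 1 := by have := Finset.mem_range.1 hm; omega
      rw [this, pow_succ]; ring
    · simp [pow_succ]; ring

/-- choosing the point minimising `h` -/
theorem aux_min {X : Type} [MeasurableSpace X] (μ : Measure X) [IsFiniteMeasure μ]
    (h : X → ℝ) (hh : Measurable h) (h0 : ∀ c, μ {x | h x = c} = 0)
    (F : Set X → ENNReal) (N : ℕ)
    (hF : ∀ n, Measurable fun ω : Fin n → X => F (Set.range ω)) :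
    (Measurable fun x => ∫⁻ ω : Fin N → X, F (insert x (Set.range ω))
          ∂(Measure.pi fun _ => μ.restrict {y | h x < h y})) ∧
    ∫⁻ ω : Fin (N + 1) → X, F (Set.range ω) ∂(Measure.pi fun _ => μ)
      = (N + 1 : ℕ) * ∫⁻ x, ∫⁻ ω : Fin N → X, F (insert x (Set.range ω))
          ∂(Measure.pi fun _ => μ.restrict {y | h x < h y}) ∂μ := by
  classical
  have hpeel := (aux_peel μ F N (hF (N + 1))).1
  have h1 := fun i => measurePreserving_piFinSuccAbove (fun _ : Fin (N + 1) => μ) i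
  let D : Set (X × (Fin N → X)) := {z | ∀ j, h z.1 < h (z.2 j)}
  have hD : MeasurableSet D := by
    have : D = ⋂ j, {z | h z.1 < h (z.2 j)} := by ext; simp [D]
    rw [this]
    exact MeasurableSet.iInter fun j => measurableSet_lt (by fun_prop) (by fun_prop)
  let A : Fin (N + 1) → Set (Fin (N + 1) → X) := fun i =>
    (MeasurableEquiv.piFinSuccAbove (fun _ : Fin (N + 1) => X) i) ⁻¹' D
  have hAmem : ∀ i ω, ω ∈ A i ↔ ∀ j, h (ω i) < h (ω (i.succAbove j)) := by
    intro i ω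
    simp only [A, Set.mem_preimage, aux_e_apply]
    rfl
  have hA : ∀ i, MeasurableSet (A i) := fun i => (MeasurableEquiv.measurable _) hD
  have hne : ∀ i : Fin (N + 1), ∀ᵐ ω ∂(Measure.pi fun _ : Fin (N + 1) => μ), ∀ j, h (ω i) ≠ h (ω (i.succAbove j)) := by
    intro i
    have hE : ∀ᵐ z ∂(μ.prod (Measure.pi fun _ : Fin N => μ)), ∀ j, h z.1 ≠ h (z.2 j) := by
      rw [ae_all_iff]
      intro j
      rw [ae_iff]
      have hms : MeasurableSet {z : X × (Fin N → X) | ¬ h z.1 ≠ h (z.2 j)} := by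
        simp only [not_not]
        exact measurableSet_eq_fun (by fun_prop) (by fun_prop)
      rw [Measure.prod_apply_symm hms]
      simp [h0]
    have := (h1 i).quasiMeasurePreserving.ae hE
    filter_upwards [this] with ω hω j
    exact hω j
  have hinj : ∀ᵐ ω ∂(Measure.pi fun _ : Fin (N + 1) => μ),
      F (Set.range ω) = ∑ i, (A i).indicator (fun ω => F (Set.range ω)) ω := by
    filter_upwards [ae_all_iff.2 hne] with ω hω
    obtain ⟨i, -, hi⟩ := Finset.exists_min_image Finset.univ (fun i => h (ω i)) Finset.univ_nonempty
    rw [Finset.sum_eq_single i]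
    · rw [Set.indicator_of_mem]
      rw [hAmem]
      intro j
      exact lt_of_le_of_ne (hi _ (Finset.mem_univ _)) (hω i j)
    · intro b _ hb
      rw [Set.indicator_of_notMem]
      rw [hAmem]
      intro hc
      obtain ⟨j, hj⟩ := Fin.exists_succAbove_eq hb.symm
      have := hc j
      rw [hj] at this
      exact absurd (hi b (Finset.mem_univ _)) (not_le.2 this)
    · simp
  have hg : Measurable (D.indicator fun z : X × (Fin N → X) => F (insert z.1 (Set.range z.2))) :=
    hpeel.indicator hD
  have hx : ∀ x, ∫⁻ ω : Fin N → X,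
      (D.indicator fun z : X × (Fin N → X) => F (insert z.1 (Set.range z.2))) (x, ω)
        ∂(Measure.pi fun _ => μ) = ∫⁻ ω : Fin N → X, F (insert x (Set.range ω))
          ∂(Measure.pi fun _ => μ.restrict {y | h x < h y}) := by
    intro x
    have hs : MeasurableSet {y | h x < h y} := measurableSet_lt measurable_const hh
    rw [← Measure.restrict_pi_pi, ← lintegral_indicator (MeasurableSet.univ_pi fun _ => hs)]
    refine lintegral_congr fun ω => ?_
    simp [Set.indicator, D]
  refine ⟨?_, ?_⟩
  · simp_rw [← hx]
    exact Measurable.lintegral_prod_right' hg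
  rw [lintegral_congr_ae hinj, lintegral_finsetSum _ (fun i _ => (hF _).indicator (hA i))]
  have key : ∀ i : Fin (N + 1), ∫⁻ ω, (A i).indicator (fun ω => F (Set.range ω)) ω ∂(Measure.pi fun _ => μ)
      = ∫⁻ x, ∫⁻ ω : Fin N → X, F (insert x (Set.range ω))
          ∂(Measure.pi fun _ => μ.restrict {y | h x < h y}) ∂μ := by
    intro i
    have e : ∀ ω, (A i).indicator (fun ω => F (Set.range ω)) ω =
        (D.indicator fun z : X × (Fin N → X) => F (insert z.1 (Set.range z.2)))
          (MeasurableEquiv.piFinSuccAbove (fun _ : Fin (N + 1) => X) i ω) := by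
      intro ω
      have : F (Set.range ω) = F (insert (MeasurableEquiv.piFinSuccAbove (fun _ : Fin (N + 1) => X) i ω).1
        (Set.range (MeasurableEquiv.piFinSuccAbove (fun _ : Fin (N + 1) => X) i ω).2)) := by
        congr 1
        ext y
        simp [aux_e_apply, Fin.exists_iff_succAbove i, eq_comm]
      by_cases hω : ω ∈ A i
      · rw [Set.indicator_of_mem hω, Set.indicator_of_mem (show _ ∈ D from hω), this]
      · rw [Set.indicator_of_notMem hω, Set.indicator_of_notMem (show _ ∉ D from hω)]
    simp_rw [e]
    rw [(h1 i).lintegral_comp hg, lintegral_prod _ hg.aemeasurable]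
    exact lintegral_congr hx
  simp [key]

/-- pushing forward by `χ` with a scaling factor -/
theorem aux_push {X : Type} [MeasurableSpace X] (μ : Measure X) [IsFiniteMeasure μ]
    (χ : X → X) (hχ : Measurable χ) (s : ENNReal) (hs : s ≠ ⊤) (m : ℕ) (f : (Fin m → X) → ENNReal)
    (hf : Measurable f) :
    ∫⁻ ω, f ω ∂(Measure.pi fun _ : Fin m => s • μ.map χ)
      = s ^ m * ∫⁻ ω, f (fun i => χ (ω i)) ∂(Measure.pi fun _ : Fin m => μ) := by
  have e : (Measure.pi fun _ : Fin m => s • μ.map χ) =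
      s ^ m • (Measure.pi fun _ : Fin m => μ).map (fun ω i => χ (ω i)) := by
    have : IsFiniteMeasure (s • μ.map χ) := Measure.smul_finite _ hs
    refine Measure.pi_eq fun A hA => ?_
    have hp := Measure.pi_map_pi (μ := fun _ : Fin m => μ) (f := fun _ => χ)
      (fun _ => hχ.aemeasurable)
    rw [Measure.smul_apply, hp, Measure.pi_pi]
    simp [Finset.prod_mul_distrib]
  rw [e, lintegral_smul_measure, lintegral_map hf (by fun_prop)]
  rfl

theorem aux_T_eq : T = {p : ℝ × ℝ | 0 ≤ p.1 ∧ 0 ≤ p.2 ∧ p.1 + p.2 ≤ 1} := by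
  apply Set.Subset.antisymm
  · apply convexHull_min
    · intro p hp
      simp only [Set.mem_insert_iff, Set.mem_singleton_iff] at hp
      rcases hp with rfl | rfl | rfl <;> norm_num
    · intro p hp q hq a b ha hb hab
      obtain ⟨h1, h2, h3⟩ := hp
      obtain ⟨h4, h5, h6⟩ := hq
      refine ⟨?_, ?_, ?_⟩ <;> simp only [Prod.fst_add, Prod.snd_add, Prod.smul_fst, Prod.smul_snd, smul_eq_mul]
      · positivity
      · positivity
      · nlinarith
  · rintro ⟨x, y⟩ ⟨h1, h2, h3⟩
    simp only at h1 h2 h3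
    rw [T, convexHull_insert (by simp), convexHull_pair, mem_convexJoin]
    refine ⟨(0, 0), rfl, ?_⟩
    rcases eq_or_lt_of_le (add_nonneg h1 h2) with h | h
    · have hx : x = 0 := by linarith
      have hy : y = 0 := by linarith
      exact ⟨(1, 0), left_mem_segment _ _ _, by rw [hx, hy]; exact left_mem_segment _ _ _⟩
    · refine ⟨(x / (x + y), y / (x + y)), ⟨x / (x + y), y / (x + y), by positivity, by positivity, by field_simp, by simp⟩,
        1 - (x + y), x + y, by linarith, by linarith, by ring, ?_⟩
      simp
      constructor <;> field_simp

theorem aux_T_closed : IsClosed T := by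
  rw [aux_T_eq]
  simp only [Set.ofPred_and]
  refine IsClosed.inter ?_ (IsClosed.inter ?_ ?_)
  · exact isClosed_le (by fun_prop) (by fun_prop)
  · exact isClosed_le (by fun_prop) (by fun_prop)
  · exact isClosed_le (by fun_prop) (by fun_prop)

theorem aux_T_meas : MeasurableSet T := aux_T_closed.measurableSet

theorem aux_lint (f : ℝ × ℝ → ENNReal) (hf : Measurable f) :
    ∫⁻ p, f p ∂μT = ∫⁻ u in Set.Ioo (0 : ℝ) 1, ∫⁻ t in Set.Ioo (0 : ℝ) 1,
      ENNReal.ofReal (2 * t) * f (t * u, 1 - t) := by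
  have hm1 : Measurable (T.indicator f) := hf.indicator aux_T_meas
  rw [μT, lintegral_smul_measure, ← lintegral_indicator aux_T_meas, Measure.volume_eq_prod,
    lintegral_prod_symm _ hm1.aemeasurable]
  have hinner : ∀ᵐ y : ℝ, ∫⁻ x, T.indicator f (x, y) =
      (Set.Ioo (0 : ℝ) 1).indicator
        (fun y => ENNReal.ofReal (1 - y) * ∫⁻ u in Set.Ioo (0 : ℝ) 1, f ((1 - y) * u, y)) y := by
    have n0 : ∀ᵐ y : ℝ, y ≠ 0 := by simp [ae_iff]
    have n1 : ∀ᵐ y : ℝ, y ≠ 1 := by simp [ae_iff]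
    filter_upwards [n0, n1] with y hy0 hy1
    by_cases hy : y ∈ Set.Ioo (0 : ℝ) 1
    · rw [Set.indicator_of_mem hy]
      obtain ⟨h0, h1⟩ := hy
      have e1 : ∀ x, T.indicator f (x, y) = (Set.Icc 0 (1 - y)).indicator (fun x => f (x, y)) x := by
        intro x
        have : (x, y) ∈ T ↔ x ∈ Set.Icc 0 (1 - y) := by
          rw [aux_T_eq]
          simp only [Set.mem_ofPred_eq, Set.mem_Icc]
          constructor
          · rintro ⟨a, b, c⟩; exact ⟨a, by linarith⟩
          · rintro ⟨a, b⟩; exact ⟨a, h0.le, by linarith⟩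
        by_cases hx : (x, y) ∈ T
        · rw [Set.indicator_of_mem hx, Set.indicator_of_mem (this.1 hx)]
        · rw [Set.indicator_of_notMem hx, Set.indicator_of_notMem (fun h => hx (this.2 h))]
      simp_rw [e1]
      rw [lintegral_indicator measurableSet_Icc, ← restrict_Ioo_eq_restrict_Icc]
      have him : Set.Ioo 0 (1 - y) = (fun u => (1 - y) * u) '' Set.Ioo (0 : ℝ) 1 := by
        have hp : 0 < 1 - y := by linarith
        ext x
        simp only [Set.mem_image, Set.mem_Ioo]
        constructor
        · rintro ⟨ha, hb⟩
          exact ⟨x / (1 - y), ⟨by positivity, by rwa [div_lt_one hp]⟩, by field_simp⟩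
        · rintro ⟨u, ⟨ha, hb⟩, rfl⟩
          exact ⟨by positivity, by nlinarith⟩
      rw [him, lintegral_image_eq_lintegral_abs_deriv_mul measurableSet_Ioo (f' := fun _ => 1 - y)]
      · rw [lintegral_const_mul, abs_of_pos (by linarith)]
        exact hf.comp (by fun_prop)
      · intro x _
        simpa using ((hasDerivAt_id x).const_mul (1 - y)).hasDerivWithinAt
      · intro a _ b _ hab
        have : (1 - y) ≠ 0 := by linarith
        simpa [this] using hab
    · rw [Set.indicator_of_notMem hy]
      have : ∀ x, T.indicator f (x, y) = 0 := by
        intro x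
        apply Set.indicator_of_notMem
        rw [aux_T_eq]
        rintro ⟨a, b, c⟩
        simp only at a b c
        apply hy
        exact ⟨lt_of_le_of_ne b (Ne.symm hy0), lt_of_le_of_ne (by linarith) hy1⟩
      simp [this]
  rw [lintegral_congr_ae hinner, lintegral_indicator measurableSet_Ioo]
  have him : Set.Ioo (0 : ℝ) 1 = (fun t => 1 - t) '' Set.Ioo (0 : ℝ) 1 := by
    simp
  have e2 : ∫⁻ y in Set.Ioo (0 : ℝ) 1, ENNReal.ofReal (1 - y) * ∫⁻ u in Set.Ioo (0 : ℝ) 1, f ((1 - y) * u, y)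
    = ∫⁻ t in Set.Ioo (0 : ℝ) 1, ENNReal.ofReal t * ∫⁻ u in Set.Ioo (0 : ℝ) 1, f (t * u, 1 - t) := by
    conv_lhs => rw [him]
    rw [lintegral_image_eq_lintegral_abs_deriv_mul measurableSet_Ioo (f' := fun _ => -1)]
    · simp
    · intro x _
      simpa using ((hasDerivAt_id x).const_sub 1).hasDerivWithinAt
    · intro a _ b _ hab
      simpa using hab
  rw [e2, smul_eq_mul, ← lintegral_const_mul']
  swap
  · simp
  rw [← lintegral_lintegral_swap]
  · refine setLIntegral_congr_fun measurableSet_Ioo fun t ht => ?_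
    rw [lintegral_const_mul, ← mul_assoc, ENNReal.ofReal_mul (by norm_num), ENNReal.ofReal_ofNat]
    exact hf.comp (by fun_prop)
  · have : Measurable fun z : ℝ × ℝ => ENNReal.ofReal (2 * z.1) * f (z.1 * z.2, 1 - z.1) :=
      Measurable.mul (by fun_prop) (hf.comp (by fun_prop))
    exact this.aemeasurable

theorem aux_int_pow (n : ℕ) : ∫⁻ u in Set.Ioo (0 : ℝ) 1, ENNReal.ofReal (u ^ n) = ENNReal.ofReal (1 / (n + 1)) := by
  rw [restrict_Ioo_eq_restrict_Ioc, ← ofReal_integral_eq_lintegral_ofReal]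
  · rw [← intervalIntegral.integral_of_le zero_le_one, integral_pow]; simp
  · exact ((continuous_pow n).integrableOn_Icc).mono_set Set.Ioc_subset_Icc_self
  · refine (ae_restrict_iff' measurableSet_Ioc).2 (Filter.Eventually.of_forall fun u hu => ?_)
    exact pow_nonneg hu.1.le _

theorem aux_beta_real (b : ℕ) : ∀ a : ℕ, ∫ t in (0 : ℝ)..1, t ^ a * (1 - t) ^ b
    = 1 / ((a + b + 1) * ((a + b).choose b : ℝ)) := by
  induction b with
  | zero => intro a; simp [integral_pow]
  | succ b ih =>
    intro a
    have h := intervalIntegral.integral_mul_deriv_eq_deriv_mul (a := (0 : ℝ)) (b := 1)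
      (u := fun t : ℝ => (1 - t) ^ (b + 1)) (u' := fun t => -((b + 1 : ℝ) * (1 - t) ^ b))
      (v := fun t => t ^ (a + 1) / (a + 1)) (v' := fun t => t ^ a)
      (fun x _ => by
        have := ((hasDerivAt_id x).const_sub 1).fun_pow (b + 1)
        simpa using this)
      (fun x _ => by
        have := ((hasDerivAt_id x).fun_pow (a + 1)).div_const (a + 1 : ℝ)
        have h0 : (a + 1 : ℝ) ≠ 0 := by positivity
        simp at this
        convert this using 1
        field_simp)
      (by apply Continuous.intervalIntegrable; fun_prop)
      (by apply Continuous.intervalIntegrable; fun_prop)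
    have e1 : ∫ t in (0 : ℝ)..1, t ^ a * (1 - t) ^ (b + 1) = (b + 1) / (a + 1) * ∫ t in (0 : ℝ)..1, t ^ (a + 1) * (1 - t) ^ b := by
      simp_rw [mul_comm (_ ^ a)]
      rw [h]
      simp
      rw [← intervalIntegral.integral_const_mul]
      congr 1
      ext t
      field_simp
    rw [e1, ih (a + 1)]
    have hc : ((a + (b + 1)).choose (b + 1) : ℝ) * (b + 1) = ((a + 1 + b).choose b : ℝ) * (a + 1) := by
      have := Nat.choose_succ_right_eq (a + 1 + b) b
      have h2 : a + (b + 1) = a + 1 + b := by ring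
      rw [h2]
      have h3 : a + 1 + b - b = a + 1 := by omega
      rw [h3] at this
      exact_mod_cast this
    have p1 : (0 : ℝ) < ((a + (b + 1)).choose (b + 1) : ℝ) := by exact_mod_cast Nat.choose_pos (by omega)
    have p2 : (0 : ℝ) < ((a + 1 + b).choose b : ℝ) := by exact_mod_cast Nat.choose_pos (by omega)
    push_cast
    rw [div_mul_div_comm, div_eq_div_iff (by positivity) (by positivity)]
    linear_combination (a + 1 + b + 1 : ℝ) * hc

theorem aux_beta (a b : ℕ) : ∫⁻ t in Set.Ioo (0 : ℝ) 1, ENNReal.ofReal (t ^ a * (1 - t) ^ b)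
    = ENNReal.ofReal (1 / ((a + b + 1) * ((a + b).choose b : ℝ))) := by
  rw [restrict_Ioo_eq_restrict_Ioc, ← ofReal_integral_eq_lintegral_ofReal]
  · rw [← intervalIntegral.integral_of_le zero_le_one, aux_beta_real]
  · exact ((by fun_prop : Continuous fun t : ℝ => t ^ a * (1 - t) ^ b).integrableOn_Icc).mono_set Set.Ioc_subset_Icc_self
  · refine (ae_restrict_iff' measurableSet_Ioc).2 (Filter.Eventually.of_forall fun u hu => ?_)
    exact mul_nonneg (pow_nonneg hu.1.le _) (pow_nonneg (by linarith [hu.2]) _)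

theorem aux_muT_univ : μT Set.univ = 1 := by
  rw [← lintegral_one, aux_lint _ measurable_const]
  simp only [mul_one]
  have : ∫⁻ t in Set.Ioo (0 : ℝ) 1, ENNReal.ofReal (2 * t) = 1 := by
    have := aux_int_pow 1
    simp_rw [ENNReal.ofReal_mul (zero_le_two (α := ℝ))]
    rw [lintegral_const_mul _ (by fun_prop)]
    simp only [pow_one] at this
    rw [this, ← ENNReal.ofReal_mul (by norm_num)]
    norm_num
  rw [this]
  simp

theorem aux_T_vol : 2 * volume T = 1 := by
  have := aux_muT_univ
  simpa [μT] using this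

instance aux_prob : IsProbabilityMeasure μT := ⟨aux_muT_univ⟩

/-- the slope coordinate -/
def hS (p : ℝ × ℝ) : ℝ := p.1 / (1 - p.2)

theorem hS_meas : Measurable hS := by unfold hS; fun_prop

theorem hS_null (c : ℝ) : μT {x | hS x = c} = 0 := by
  have hm : MeasurableSet {x | hS x = c} := hS_meas (measurableSet_singleton c)
  rw [← lintegral_indicator_one hm, aux_lint _ (measurable_one.indicator hm)]
  rw [lintegral_eq_zero_iff' ]
  · have n0 : ∀ᵐ y : ℝ, y ≠ c := by simp [ae_iff]
    filter_upwards [ae_restrict_of_ae n0] with u hu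
    rw [Pi.zero_apply, ← lintegral_zero]
    refine setLIntegral_congr_fun measurableSet_Ioo fun t ht => ?_
    have : (t * u, 1 - t) ∉ {x | hS x = c} := by
      have : t ≠ 0 := ht.1.ne'
      simp [hS, this, hu]
    simp [Set.indicator_of_notMem this]
  · have : Measurable fun z : ℝ × ℝ => ENNReal.ofReal (2 * z.2) *
        ({x | hS x = c}.indicator (1 : ℝ × ℝ → ENNReal)) (z.2 * z.1, 1 - z.2) :=
      Measurable.mul (by fun_prop) ((measurable_one.indicator hm).comp (by fun_prop))
    exact (Measurable.lintegral_prod_right' this).aemeasurable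

/-- The (extended) normalised area as a function of the point set. -/
def W (S : Set (ℝ × ℝ)) : ENNReal := 2 * volume (convexHull ℝ (S ∪ {(1, 0), (0, 1)}))

theorem aux_chain_closed (n : ℕ) :
    IsClosed {z : (Fin n → ℝ × ℝ) × (ℝ × ℝ) | z.2 ∈ convexHull ℝ (Set.range z.1)} := by
  have e : {z : (Fin n → ℝ × ℝ) × (ℝ × ℝ) | z.2 ∈ convexHull ℝ (Set.range z.1)}
      = Prod.snd '' {y : (stdSimplex ℝ (Fin n)) × ((Fin n → ℝ × ℝ) × (ℝ × ℝ)) |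
        ∑ i, y.1.1 i • y.2.1 i = y.2.2} := by
    ext ⟨ω, p⟩
    have : convexHull ℝ (Set.range ω) = (fun w : Fin n → ℝ => ∑ i, w i • ω i) '' stdSimplex ℝ (Fin n) := by
      rw [← convexHull_basis_eq_stdSimplex]
      let L : (Fin n → ℝ) →ₗ[ℝ] (ℝ × ℝ) := Fintype.linearCombination ℝ ω
      have hL : (fun w : Fin n → ℝ => ∑ i, w i • ω i) = L := by
        ext1 w; simp [L, Fintype.linearCombination_apply]
      rw [hL, LinearMap.image_convexHull, ← Set.range_comp]
      congr 2
      ext1 i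
      rw [Function.comp, ← hL]
      simp
    simp only [Set.mem_ofPred_eq, this]
    simp
  rw [e]
  apply isClosedMap_snd_of_compactSpace
  apply isClosed_eq
  · refine continuous_finsetSum _ fun i _ => ?_
    have : Continuous fun y : (stdSimplex ℝ (Fin n)) × ((Fin n → ℝ × ℝ) × (ℝ × ℝ)) => y.1.1 :=
      continuous_subtype_val.comp continuous_fst
    have h2 : Continuous fun y : (stdSimplex ℝ (Fin n)) × ((Fin n → ℝ × ℝ) × (ℝ × ℝ)) => y.1.1 i :=
      (continuous_apply i).comp this
    exact h2.smul (by fun_prop)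
  · fun_prop

theorem aux_W_meas (n : ℕ) : Measurable fun ω : Fin n → ℝ × ℝ => W (Set.range ω) := by
  unfold W
  refine Measurable.const_mul ?_ _
  have h := measurable_measure_prodMk_left (ν := (volume : Measure (ℝ × ℝ))) (aux_chain_closed (n + 2)).measurableSet
  have hc : Measurable fun ω : Fin n → ℝ × ℝ => (Fin.append ω ![((1:ℝ), (0:ℝ)), (0, 1)] : Fin (n + 2) → ℝ × ℝ) := by
    rw [measurable_pi_iff]
    intro a
    refine Fin.addCases (fun i => ?_) (fun i => ?_) a
    · simp only [Fin.append_left]; fun_prop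
    · simp only [Fin.append_right]; fun_prop
  convert h.comp hc using 2 with ω
  simp only [Function.comp]
  congr 1
  have : Set.range (Fin.append ω ![((1:ℝ), (0:ℝ)), (0, 1)]) = Set.range ω ∪ {(1, 0), (0, 1)} := by
    ext p
    simp only [Set.mem_range, Set.mem_union, Set.mem_insert_iff, Set.mem_singleton_iff]
    constructor
    · rintro ⟨i, rfl⟩
      refine Fin.addCases (fun i => ?_) (fun i => ?_) i
      · left; exact ⟨i, by simp⟩
      · right; simp only [Fin.append_right]; fin_cases i <;> simp
    · rintro (⟨i, rfl⟩ | rfl | rfl)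
      · exact ⟨Fin.castAdd _ i, by simp⟩
      · exact ⟨Fin.natAdd n (0 : Fin 2), by simp⟩
      · exact ⟨Fin.natAdd n (1 : Fin 2), by simp⟩
  ext p
  simp [this]

/-! affine maps -/

def Lm (a b c d : ℝ) : (ℝ × ℝ) →ₗ[ℝ] (ℝ × ℝ) :=
  Matrix.toLin (Module.Basis.finTwoProd ℝ) (Module.Basis.finTwoProd ℝ) !![a, b; c, d]

theorem Lm_apply (a b c d : ℝ) (p : ℝ × ℝ) : Lm a b c d p = (a * p.1 + b * p.2, c * p.1 + d * p.2) :=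
  Matrix.toLin_finTwoProd_apply _ _ _ _ _

theorem Lm_det (a b c d : ℝ) : LinearMap.det (Lm a b c d) = a * d - b * c := by
  rw [Lm, LinearMap.det_toLin, Matrix.det_fin_two_of]

/-- the affine map `p ↦ L p + v` -/
def Am (a b c d : ℝ) (v : ℝ × ℝ) : (ℝ × ℝ) →ᵃ[ℝ] (ℝ × ℝ) :=
  (Lm a b c d).toAffineMap + AffineMap.const ℝ (ℝ × ℝ) v

theorem Am_apply (a b c d : ℝ) (v p : ℝ × ℝ) :
    Am a b c d v p = (a * p.1 + b * p.2 + v.1, c * p.1 + d * p.2 + v.2) := by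
  simp [Am, Lm_apply, Prod.ext_iff]

theorem Am_meas (a b c d : ℝ) (v : ℝ × ℝ) : Measurable (Am a b c d v) := by
  have : (Am a b c d v : ℝ × ℝ → ℝ × ℝ) = fun p => (a * p.1 + b * p.2 + v.1, c * p.1 + d * p.2 + v.2) := by
    ext1 p; exact Am_apply _ _ _ _ _ _
  rw [this]; fun_prop

theorem Am_volume (a b c d : ℝ) (v : ℝ × ℝ) (S : Set (ℝ × ℝ)) :
    volume (Am a b c d v '' S) = ENNReal.ofReal |a * d - b * c| * volume S := by
  have : Am a b c d v '' S = (fun p => p + v) '' (Lm a b c d '' S) := by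
    rw [Set.image_image]; rfl
  rw [this, Set.image_add_right, measure_preimage_add_right, Measure.addHaar_image_linearMap, Lm_det]

theorem Am_restrict (a b c d : ℝ) (v : ℝ × ℝ) (hsub : Am a b c d v '' T ⊆ T) :
    μT.restrict (Am a b c d v '' T) = (ENNReal.ofReal |a * d - b * c|) • μT.map (Am a b c d v) := by
  ext E hE
  rw [Measure.restrict_apply hE, Measure.smul_apply, Measure.map_apply (Am_meas _ _ _ _ _) hE]
  simp only [μT, Measure.smul_apply]
  rw [Measure.restrict_apply' aux_T_meas, Measure.restrict_apply' aux_T_meas]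
  have : E ∩ (Am a b c d v '' T) ∩ T = Am a b c d v '' ((Am a b c d v) ⁻¹' E ∩ T) := by
    rw [Set.inter_assoc, Set.inter_eq_left.2 hsub, Set.inter_comm, ← Set.image_inter_preimage, Set.inter_comm]
  rw [this, Am_volume]
  simp only [smul_eq_mul]
  ring

/-- effect on the hull -/
theorem W_Am (a b c d : ℝ) (v : ℝ × ℝ) (h1 : Am a b c d v (1, 0) = (1, 0))
    (h2 : Am a b c d v (0, 1) = (0, 1)) (S : Set (ℝ × ℝ)) :
    W (Am a b c d v '' S) = ENNReal.ofReal |a * d - b * c| * W S := by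
  have : Am a b c d v '' S ∪ {(1, 0), (0, 1)} = Am a b c d v '' (S ∪ {(1, 0), (0, 1)}) := by
    rw [Set.image_union, Set.image_pair, h1, h2]
  rw [W, this, ← AffineMap.image_convexHull, Am_volume, W]
  ring

/-- gluing lemma -/
theorem aux_glue (s : ℝ) (hs0 : 0 < s) (hs1 : s < 1) (S : Set (ℝ × ℝ)) (hS : S ⊆ T) (hfin : S.Finite) :
    W (insert (0, s) (Am 1 0 0 s 0 '' S)) = ENNReal.ofReal (1 - s) + ENNReal.ofReal s * W S := by
  set C := convexHull ℝ (S ∪ {(1, 0), (0, 1)}) with hC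
  set D := Am 1 0 0 s 0 '' C with hD
  have hCT : C ⊆ T := by
    apply convexHull_min _ (convex_convexHull _ _)
    apply Set.union_subset hS
    rw [aux_T_eq]
    intro p hp
    simp only [Set.mem_insert_iff, Set.mem_singleton_iff] at hp
    rcases hp with rfl | rfl <;> norm_num
  have hDconv : Convex ℝ D := (convex_convexHull ℝ _).affine_image _
  have hDe : D = convexHull ℝ ((Am 1 0 0 s 0 '' S) ∪ {(1, 0), (0, s)}) := by
    rw [hD, hC, AffineMap.image_convexHull, Set.image_union, Set.image_pair]
    simp [Am_apply]
  have hDB : ∀ p ∈ D, 0 ≤ p.1 ∧ 0 ≤ p.2 ∧ p.2 ≤ s * (1 - p.1) := by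
    rintro _ ⟨p, hp, rfl⟩
    have := hCT hp
    rw [aux_T_eq] at this
    obtain ⟨a1, a2, a3⟩ := this
    rw [Am_apply]
    simp
    refine ⟨a1, by positivity, ?_⟩
    nlinarith
  have hDfull : convexHull ℝ (insert (0, s) (Am 1 0 0 s 0 '' S) ∪ {(1, 0), (0, 1)})
      = convexHull ℝ (insert (0, 1) ((Am 1 0 0 s 0 '' S) ∪ {(1, 0), (0, s)})) := by
    congr 1
    ext p; simp; tauto
  let A : Set (ℝ × ℝ) := Am (1 : ℝ) 0 (-s) (1 - s) (0, s) '' T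
  have hAmem : ∀ p : ℝ × ℝ, 0 ≤ p.1 → p.1 + p.2 ≤ 1 → s * (1 - p.1) ≤ p.2 → p ∈ A := by
    intro p h1 h2 h3
    refine ⟨(p.1, (p.2 - s * (1 - p.1)) / (1 - s)), ?_, ?_⟩
    · rw [aux_T_eq]
      have : 0 < 1 - s := by linarith
      refine ⟨h1, div_nonneg (by linarith) this.le, ?_⟩
      simp only
      rw [← le_sub_iff_add_le', div_le_iff₀ this]
      nlinarith
    · rw [Am_apply]
      have : 1 - s ≠ 0 := by linarith
      ext <;> simp
      field_simp
      ring
  have hAm2 : ∀ p ∈ A, s * (1 - p.1) ≤ p.2 := by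
    rintro _ ⟨p, hp, rfl⟩
    rw [aux_T_eq] at hp
    obtain ⟨a1, a2, a3⟩ := hp
    rw [Am_apply]
    simp
    nlinarith
  have hAhull : A = convexHull ℝ {(0, s), (1, 0), (0, 1)} := by
    simp only [A, T]
    rw [AffineMap.image_convexHull, Set.image_insert_eq, Set.image_pair]
    simp [Am_apply]
  have hunion : convexHull ℝ (insert (0, s) (Am 1 0 0 s 0 '' S) ∪ {(1, 0), (0, 1)}) = A ∪ D := by
    apply Set.Subset.antisymm
    · rw [hDfull, convexHull_insert (by simp), ← hDe]
      intro p hp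
      rw [mem_convexJoin] at hp
      obtain ⟨e, rfl, c, hc, α, β, hα, hβ, hαβ, rfl⟩ := hp
      obtain ⟨b1, b2, b3⟩ := hDB c hc
      by_cases hside : s * (1 - β * c.1) ≤ α + β * c.2
      · left
        have hα' : α = 1 - β := by linarith
        apply hAmem
        · simp; positivity
        · simp
          have : c.1 + c.2 ≤ 1 := by nlinarith
          nlinarith
        · simpa using hside
      · right
        push Not at hside
        have hα' : α = 1 - β := by linarith
        subst hα'
        set l := s * (1 - c.1) - c.2 with hl
        have hl0 : 0 ≤ l := by linarith
        have hden : 0 < 1 - s + l := by linarith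
        set θ := (1 - s) / (1 - s + l) with hθ
        have hθ0 : 0 < θ := by apply div_pos <;> linarith
        have hθl : θ * (1 - s + l) = 1 - s := by rw [hθ]; field_simp
        have hβθ : θ < β := by
          rw [hθ, div_lt_iff₀ hden]
          nlinarith
        have hβ1 : β ≤ 1 := by linarith
        have hθ1 : θ < 1 := by linarith
        have hz2 : (1 - θ) + θ * c.2 = s * (1 - θ * c.1) := by nlinarith
        have hc1 : θ * c.1 ≤ 1 := by nlinarith
        have hz : ((θ * c.1, (1 - θ) + θ * c.2) : ℝ × ℝ) ∈ D := by
          have m1 : ((1 : ℝ), (0 : ℝ)) ∈ D := by rw [hDe]; apply subset_convexHull; simp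
          have m2 : ((0 : ℝ), s) ∈ D := by rw [hDe]; apply subset_convexHull; simp
          have := hDconv m1 m2 (a := θ * c.1) (b := 1 - θ * c.1) (by positivity) (by linarith) (by ring)
          convert this using 1
          ext <;> simp
          linarith
        have h1θ : 0 < 1 - θ := by linarith
        have := hDconv hz hc (a := (1 - β) / (1 - θ)) (b := (β - θ) / (1 - θ)) (div_nonneg hα h1θ.le)
          (div_nonneg (by linarith) h1θ.le) (by field_simp; ring)
        convert this using 1
        ext <;> simp <;> field_simp <;> ring
    · apply Set.union_subset
      · rw [hAhull]
        apply convexHull_mono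
        intro p hp
        simp at hp ⊢
        tauto
      · rw [hDfull, hDe]
        exact convexHull_mono (Set.subset_insert _ _)
  have hDmeas : MeasurableSet D := by
    rw [hDe]
    exact (((hfin.image _).union (by simp)).isClosed_convexHull ℝ).measurableSet
  have hnull : volume (A ∩ D) = 0 := by
    have hsub : A ∩ D ⊆ Am 1 0 (-s) 0 (0, s) '' Set.univ := by
      rintro p ⟨hpA, hpD⟩
      refine ⟨p, trivial, ?_⟩
      have h1 := hAm2 p hpA
      have h2 := (hDB p hpD).2.2
      rw [Am_apply]
      ext <;> simp
      linarith
    have hline : volume (Am 1 0 (-s) 0 (0, s) '' Set.univ) = 0 := by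
      rw [Am_volume]; simp
    exact measure_mono_null hsub hline
  have hae : AEDisjoint volume A D := hnull
  have hvA : volume A = ENNReal.ofReal (1 - s) * volume T := by
    simp only [A]
    rw [Am_volume]
    congr 2
    rw [abs_of_pos] <;> linarith
  have hvD : volume D = ENNReal.ofReal s * volume C := by
    rw [hD, Am_volume]
    congr 2
    rw [abs_of_pos] <;> linarith
  have hT : 2 * volume T = 1 := aux_T_vol
  rw [W, hunion, measure_union₀ hDmeas.nullMeasurableSet hae, hvA, hvD, W, mul_add, ← hC]
  rw [mul_left_comm, hT, mul_one, mul_left_comm]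

/-! ### Assembling the recurrence -/

theorem aux_muT_ae : ∀ᵐ x ∂μT, x ∈ T := by
  rw [μT]
  exact Measure.ae_smul_measure (ae_restrict_mem aux_T_meas) _

theorem aux_ins_meas (x : ℝ × ℝ) (k n : ℕ) :
    Measurable fun ω : Fin n → ℝ × ℝ => W (insert x (Set.range ω)) ^ k := by
  have h := (aux_peel μT W n (aux_W_meas (n + 1))).1
  exact (h.comp (measurable_prodMk_left (x := x))).pow_const k

theorem aux_low_sub (s : ℝ) (hs0 : 0 < s) (hs1 : s < 1) : Am 1 0 0 s 0 '' T ⊆ T := by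
  rintro _ ⟨p, hp, rfl⟩
  rw [aux_T_eq] at hp ⊢
  obtain ⟨a1, a2, a3⟩ := hp
  rw [Am_apply]
  refine ⟨by simpa using a1, by simp; positivity, ?_⟩
  simp
  nlinarith

theorem aux_upper (s : ℝ) (hs0 : 0 < s) (hs1 : s < 1) (x : ℝ × ℝ) (hx : x ∈ T)
    (hxB : x ∉ Am 1 0 0 s 0 '' T) :
    x ∈ convexHull ℝ {((0 : ℝ), s), (1, 0), (0, 1)} := by
  rw [aux_T_eq] at hx
  obtain ⟨h1, h2, h3⟩ := hx
  by_cases hc : x.2 ≤ s * (1 - x.1)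
  · exfalso
    apply hxB
    refine ⟨(x.1, x.2 / s), ?_, ?_⟩
    · rw [aux_T_eq]
      refine ⟨h1, by positivity, ?_⟩
      simp only
      rw [← le_sub_iff_add_le', div_le_iff₀ hs0]
      linarith
    · rw [Am_apply]
      ext <;> simp
      field_simp
  · push Not at hc
    have hAhull : Am (1 : ℝ) 0 (-s) (1 - s) (0, s) '' T = convexHull ℝ {((0 : ℝ), s), (1, 0), (0, 1)} := by
      simp only [T]
      rw [AffineMap.image_convexHull, Set.image_insert_eq, Set.image_pair]
      simp [Am_apply]
    rw [← hAhull]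
    refine ⟨(x.1, (x.2 - s * (1 - x.1)) / (1 - s)), ?_, ?_⟩
    · rw [aux_T_eq]
      have : 0 < 1 - s := by linarith
      refine ⟨h1, div_nonneg (by linarith) this.le, ?_⟩
      simp only
      rw [← le_sub_iff_add_le', div_le_iff₀ this]
      nlinarith
    · rw [Am_apply]
      have : 1 - s ≠ 0 := by linarith
      ext <;> simp
      field_simp
      ring

theorem aux_W_absorb (s : ℝ) (x : ℝ × ℝ) (hx : x ∈ convexHull ℝ {((0 : ℝ), s), (1, 0), (0, 1)})
    (S : Set (ℝ × ℝ)) : W (insert (0, s) (insert x S)) = W (insert (0, s) S) := by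
  unfold W
  congr 2
  apply Set.Subset.antisymm
  · apply convexHull_min _ (convex_convexHull _ _)
    have h1 : insert (0, s) S ∪ {(1, 0), (0, 1)} ⊆ convexHull ℝ (insert ((0 : ℝ), s) S ∪ {(1, 0), (0, 1)}) :=
      subset_convexHull _ _
    have h2 : x ∈ convexHull ℝ (insert ((0 : ℝ), s) S ∪ {(1, 0), (0, 1)}) := by
      refine convexHull_mono ?_ hx
      intro p hp
      simp at hp ⊢
      tauto
    intro p hp
    by_cases hpx : p = x
    · rw [hpx]; exact h2
    · apply h1
      simp at hp ⊢
      tauto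
  · apply convexHull_mono
    intro p hp
    simp at hp ⊢
    tauto

/-- the step for a point `(0, 1 - t)` on the left edge -/
theorem aux_step4 (N k : ℕ) (t : ℝ) (ht0 : 0 < t) (ht1 : t < 1) :
    ∫⁻ ω : Fin N → ℝ × ℝ, W (insert (0, 1 - t) (Set.range ω)) ^ k ∂(Measure.pi fun _ => μT)
    = ∑ m ∈ Finset.range (N + 1), (N.choose m : ENNReal) * (ENNReal.ofReal t) ^ (N - m) *
      ((ENNReal.ofReal (1 - t)) ^ m * ∫⁻ ω : Fin m → ℝ × ℝ,
        (ENNReal.ofReal t + ENNReal.ofReal (1 - t) * W (Set.range ω)) ^ k ∂(Measure.pi fun _ => μT)) := by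
  set s := 1 - t with hs
  have hs0 : 0 < s := by linarith
  have hs1 : s < 1 := by linarith
  have hB : MeasurableSet (Am 1 0 0 s 0 '' T) := by
    rw [T, AffineMap.image_convexHull]
    exact (((Set.toFinite _).image _).isClosed_convexHull ℝ).measurableSet
  have hres : μT.restrict (Am 1 0 0 s 0 '' T) = (ENNReal.ofReal s) • μT.map (Am 1 0 0 s 0) := by
    rw [Am_restrict _ _ _ _ _ (aux_low_sub s hs0 hs1)]
    congr 2
    rw [abs_of_pos] <;> linarith
  have hmB : μT (Am 1 0 0 s 0 '' T)ᶜ = ENNReal.ofReal t := by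
    have h1 : μT (Am 1 0 0 s 0 '' T) = ENNReal.ofReal s := by
      rw [← Measure.restrict_apply_univ, hres, Measure.smul_apply,
        Measure.map_apply (Am_meas _ _ _ _ _) MeasurableSet.univ]
      simp
    rw [prob_compl_eq_one_sub hB, h1, ← ENNReal.ofReal_one, ← ENNReal.ofReal_sub _ hs0.le]
    congr 1; rw [hs]; ring
  rw [aux_binom μT _ hB N (fun S => W (insert (0, s) S) ^ k) (aux_ins_meas (0, s) k)]
  · rw [hmB, hres]
    refine Finset.sum_congr rfl fun m _ => ?_
    congr 1
    rw [aux_push μT _ (Am_meas _ _ _ _ _) _ ENNReal.ofReal_ne_top m _ (aux_ins_meas (0, s) k m)]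
    congr 1
    refine lintegral_congr_ae ?_
    have hae : ∀ᵐ ω ∂(Measure.pi fun _ : Fin m => μT), ∀ i, ω i ∈ T := by
      rw [ae_all_iff]
      intro i
      exact (Measure.quasiMeasurePreserving_eval (fun _ : Fin m => μT) i).ae aux_muT_ae
    filter_upwards [hae] with ω hω
    have : Set.range (fun i => Am 1 0 0 s 0 (ω i)) = Am 1 0 0 s 0 '' Set.range ω := by
      rw [← Set.range_comp]; rfl
    rw [this, aux_glue s hs0 hs1 _ (by rintro _ ⟨i, rfl⟩; exact hω i) (Set.finite_range _)]
    congr 3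
    rw [hs]; ring
  · filter_upwards [aux_muT_ae] with x hx hxB S
    rw [aux_W_absorb s x (aux_upper s hs0 hs1 x hx hxB)]

theorem aux_region (u : ℝ) (hu0 : 0 < u) (hu1 : u < 1) :
    μT.restrict {y | u < hS y} = ENNReal.ofReal (1 - u) • μT.map (Am (1 - u) (-u) 0 1 (u, 0)) := by
  have hmem : ∀ p, p ∈ Am (1 - u) (-u) 0 1 (u, 0) '' T ↔ p ∈ T ∧ u * (1 - p.2) ≤ p.1 := by
    intro p
    rw [aux_T_eq]
    constructor
    · rintro ⟨q, ⟨a1, a2, a3⟩, rfl⟩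
      rw [Am_apply]
      refine ⟨⟨?_, ?_, ?_⟩, ?_⟩ <;> simp <;> nlinarith
    · rintro ⟨⟨a1, a2, a3⟩, a4⟩
      have hp : 0 < 1 - u := by linarith
      refine ⟨((p.1 - u * (1 - p.2)) / (1 - u), p.2), ⟨div_nonneg (by linarith) hp.le, a2, ?_⟩, ?_⟩
      · simp only
        rw [← le_sub_iff_add_le, div_le_iff₀ hp]
        nlinarith
      · rw [Am_apply]
        ext <;> simp
        field_simp
        ring
  have hsub : Am (1 - u) (-u) 0 1 (u, 0) '' T ⊆ T := fun p hp => ((hmem p).1 hp).1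
  have h := Am_restrict _ _ _ _ _ hsub
  have hdet : |(1 - u) * 1 - -u * 0| = 1 - u := by
    rw [abs_of_pos] <;> linarith
  rw [hdet] at h
  rw [← h]
  apply Measure.restrict_congr_set
  have n1 : ∀ᵐ p ∂μT, hS p ≠ u := by rw [ae_iff]; simpa using hS_null u
  have n2 : ∀ᵐ p ∂μT, hS p ≠ 0 := by rw [ae_iff]; simpa using hS_null 0
  filter_upwards [aux_muT_ae, n1, n2] with p hp h1 h2
  apply propext
  change u < hS p ↔ p ∈ Am (1 - u) (-u) 0 1 (u, 0) '' T
  rw [hmem]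
  have hp' := hp
  rw [aux_T_eq] at hp'
  obtain ⟨a1, a2, a3⟩ := hp'
  have hp2 : p.2 ≠ 1 := by
    intro h
    apply h2
    simp [hS, h]
  have hlt : 0 < 1 - p.2 := by
    have : p.2 < 1 := lt_of_le_of_ne (by linarith) hp2
    linarith
  have e : u < hS p ↔ u ≤ hS p := ⟨le_of_lt, fun h => lt_of_le_of_ne h (Ne.symm h1)⟩
  rw [e, hS, le_div_iff₀ hlt]
  exact ⟨fun h => ⟨hp, h⟩, fun h => h.2⟩

theorem aux_step3 (N k : ℕ) (u t : ℝ) (hu0 : 0 < u) (hu1 : u < 1) (ht0 : 0 < t) :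
    ∫⁻ ω : Fin N → ℝ × ℝ, W (insert (t * u, 1 - t) (Set.range ω)) ^ k
      ∂(Measure.pi fun _ => μT.restrict {y | hS (t * u, 1 - t) < hS y})
    = ENNReal.ofReal (1 - u) ^ (N + k) *
      ∫⁻ ω : Fin N → ℝ × ℝ, W (insert (0, 1 - t) (Set.range ω)) ^ k ∂(Measure.pi fun _ => μT) := by
  have hh : hS (t * u, 1 - t) = u := by
    simp [hS]; field_simp
  rw [hh, aux_region u hu0 hu1,
    aux_push μT _ (Am_meas _ _ _ _ _) _ ENNReal.ofReal_ne_top N _ (aux_ins_meas _ k N), pow_add, mul_assoc]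
  congr 1
  rw [← lintegral_const_mul _ (aux_ins_meas _ k N)]
  refine lintegral_congr fun ω => ?_
  have e : insert (t * u, 1 - t) (Set.range fun i => Am (1 - u) (-u) 0 1 (u, 0) (ω i))
      = Am (1 - u) (-u) 0 1 (u, 0) '' (insert (0, 1 - t) (Set.range ω)) := by
    rw [Set.image_insert_eq, ← Set.range_comp]
    congr 1
    rw [Am_apply]
    ext <;> simp
    ring
  have hdet : |(1 - u) * 1 - -u * 0| = 1 - u := by
    rw [abs_of_pos] <;> linarith
  rw [e, W_Am, hdet, mul_pow]
  · rw [Am_apply]; ext <;> simp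
  · rw [Am_apply]; ext <;> simp

/-- extended moments -/
def Mo (m l : ℕ) : ENNReal := ∫⁻ ω : Fin m → ℝ × ℝ, W (Set.range ω) ^ l ∂(Measure.pi fun _ => μT)

theorem aux_step5 (m k : ℕ) (x y : ENNReal) :
    ∫⁻ ω : Fin m → ℝ × ℝ, (x + y * W (Set.range ω)) ^ k ∂(Measure.pi fun _ => μT)
      = ∑ l ∈ Finset.range (k + 1), (k.choose l : ENNReal) * (x ^ (k - l) * y ^ l) * Mo m l := by
  have e : ∀ ω : Fin m → ℝ × ℝ, (x + y * W (Set.range ω)) ^ k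
      = ∑ l ∈ Finset.range (k + 1), (k.choose l : ENNReal) * (x ^ (k - l) * y ^ l) * W (Set.range ω) ^ l := by
    intro ω
    rw [add_comm, add_pow]
    refine Finset.sum_congr rfl fun l _ => ?_
    rw [mul_pow]; ring
  simp_rw [e]
  rw [lintegral_finsetSum _ (fun l _ => ((aux_W_meas m).pow_const l).const_mul _)]
  refine Finset.sum_congr rfl fun l _ => ?_
  rw [lintegral_const_mul _ ((aux_W_meas m).pow_const l)]
  rfl

theorem aux_main (N k : ℕ) : Mo (N + 1) k = (N + 1 : ℕ) * (ENNReal.ofReal (1 / ((N + k : ℕ) + 1)) *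
    ∑ m ∈ Finset.range (N + 1), ∑ l ∈ Finset.range (k + 1),
      ENNReal.ofReal (2 * (N.choose m : ℝ) * (k.choose l : ℝ) *
        (1 / ((N + 1 + k + 1) * ((N + 1 + k).choose (m + l) : ℝ)))) * Mo m l) := by
  obtain ⟨hm, he⟩ := aux_min μT hS hS_meas hS_null (fun S => W S ^ k) N
    (fun n => (aux_W_meas n).pow_const k)
  rw [Mo, he, aux_lint _ hm]
  congr 1
  have e1 : ∀ u ∈ Set.Ioo (0 : ℝ) 1, ∫⁻ t in Set.Ioo (0 : ℝ) 1, ENNReal.ofReal (2 * t) *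
      (∫⁻ ω : Fin N → ℝ × ℝ, W (insert (t * u, 1 - t) (Set.range ω)) ^ k
        ∂(Measure.pi fun _ => μT.restrict {y | hS (t * u, 1 - t) < hS y}))
      = ENNReal.ofReal ((1 - u) ^ (N + k)) * ∑ m ∈ Finset.range (N + 1), ∑ l ∈ Finset.range (k + 1),
      ENNReal.ofReal (2 * (N.choose m : ℝ) * (k.choose l : ℝ) *
        (1 / ((N + 1 + k + 1) * ((N + 1 + k).choose (m + l) : ℝ)))) * Mo m l := by
    intro u hu
    have e2 : ∀ t ∈ Set.Ioo (0 : ℝ) 1, ENNReal.ofReal (2 * t) *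
      (∫⁻ ω : Fin N → ℝ × ℝ, W (insert (t * u, 1 - t) (Set.range ω)) ^ k
        ∂(Measure.pi fun _ => μT.restrict {y | hS (t * u, 1 - t) < hS y}))
      = ENNReal.ofReal ((1 - u) ^ (N + k)) * ∑ m ∈ Finset.range (N + 1), ∑ l ∈ Finset.range (k + 1),
        ENNReal.ofReal (2 * (N.choose m : ℝ) * (k.choose l : ℝ)) *
          ENNReal.ofReal (t ^ (N + 1 + k - (m + l)) * (1 - t) ^ (m + l)) * Mo m l := by
      intro t ht
      rw [aux_step3 N k u t hu.1 hu.2 ht.1, aux_step4 N k t ht.1 ht.2,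
        ENNReal.ofReal_pow (by linarith [hu.2])]
      rw [mul_left_comm]
      congr 1
      rw [Finset.mul_sum]
      refine Finset.sum_congr rfl fun m hm => ?_
      rw [aux_step5]
      simp_rw [Finset.mul_sum]
      refine Finset.sum_congr rfl fun l hl => ?_
      have hm' := Finset.mem_range.1 hm
      have hl' := Finset.mem_range.1 hl
      have hexp : N + 1 + k - (m + l) = 1 + (N - m) + (k - l) := by omega
      rw [hexp, ENNReal.ofReal_mul (by positivity), ENNReal.ofReal_mul (by positivity),
        ENNReal.ofReal_mul (by positivity), ENNReal.ofReal_mul (pow_nonneg ht.1.le _),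
        ENNReal.ofReal_pow ht.1.le, ENNReal.ofReal_pow (by linarith [ht.2]), ENNReal.ofReal_natCast,
        ENNReal.ofReal_natCast]
      ring
    rw [setLIntegral_congr_fun measurableSet_Ioo e2, lintegral_const_mul]
    · congr 1
      rw [lintegral_finsetSum]
      · refine Finset.sum_congr rfl fun m hm => ?_
        rw [lintegral_finsetSum]
        · refine Finset.sum_congr rfl fun l hl => ?_
          have hm' := Finset.mem_range.1 hm
          have hl' := Finset.mem_range.1 hl
          rw [lintegral_mul_const _ (by fun_prop), lintegral_const_mul _ (by fun_prop), aux_beta,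
            ← ENNReal.ofReal_mul (by positivity)]
          have hexp : N + 1 + k - (m + l) + (m + l) = N + 1 + k := by omega
          congr 3
          have hc : (((N + 1 + k - (m + l) : ℕ) : ℝ) + ((m + l : ℕ) : ℝ)) = N + 1 + k := by
            rw [← Nat.cast_add, hexp]; push_cast; ring
          rw [hexp, hc]
        · intro l _; fun_prop
      · intro m _; fun_prop
    · fun_prop
  rw [setLIntegral_congr_fun measurableSet_Ioo e1, lintegral_mul_const _ (by fun_prop)]
  congr 1
  have := aux_beta 0 (N + k)
  simpa using this

theorem Mo_zero (l : ℕ) : Mo 0 l ≠ ⊤ := by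
  have : W ∅ ≠ ⊤ := by
    unfold W
    refine ENNReal.mul_ne_top (by simp) ?_
    exact ((Set.toFinite _).isCompact_convexHull ℝ).measure_lt_top.ne
  simp [Mo]
  tauto

theorem Mo_fin (m : ℕ) : ∀ l, Mo m l ≠ ⊤ := by
  induction m using Nat.strong_induction_on with
  | _ m ih =>
    intro l
    rcases m with _ | N
    · exact Mo_zero l
    · rw [aux_main]
      refine ENNReal.mul_ne_top (by simp) (ENNReal.mul_ne_top (by simp) ?_)
      rw [ENNReal.sum_ne_top]
      intro a ha
      rw [ENNReal.sum_ne_top]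
      intro b _
      exact ENNReal.mul_ne_top (by simp) (ih a (Finset.mem_range.1 ha) b)

theorem V_eq_W (m : ℕ) (ω : Fin m → ℝ × ℝ) : V m ω = (W (Set.range ω)).toReal := by
  simp [V, W, Tchain]

theorem aux_moment (m l : ℕ) : ∫ ω, (V m ω) ^ l ∂ P m = (Mo m l).toReal := by
  simp_rw [V_eq_W, ← ENNReal.toReal_pow]
  rw [P, integral_toReal ((aux_W_meas m).pow_const l).aemeasurable, Mo]
  refine Filter.Eventually.of_forall fun ω => ?_
  refine ENNReal.pow_lt_top ?_
  unfold W
  exact ENNReal.mul_lt_top (by simp)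
    ((((Set.finite_range ω).union (Set.toFinite _)).isCompact_convexHull ℝ).measure_lt_top)

theorem aux_final (n k : ℕ) (hn : 1 ≤ n) :
    ∫ ω, (V n ω) ^ k ∂ P n
      = 2 * (n : ℝ) / (((n : ℝ) + k) * ((n : ℝ) + k + 1)) *
        ∑ l ∈ Finset.range (k + 1), ∑ m ∈ Finset.range n,
          ((n - 1).choose m : ℝ) * (k.choose l : ℝ) / ((n + k).choose (m + l) : ℝ) *
            ∫ ω, (V m ω) ^ l ∂ P m := by
  obtain ⟨N, rfl⟩ : ∃ N, n = N + 1 := ⟨n - 1, by omega⟩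
  simp_rw [aux_moment]
  rw [aux_main, ENNReal.toReal_mul, ENNReal.toReal_mul, ENNReal.toReal_ofReal (by positivity),
    ENNReal.toReal_sum]
  · rw [Finset.sum_comm (s := Finset.range (k + 1)), Finset.mul_sum, Finset.mul_sum, Finset.mul_sum]
    refine Finset.sum_congr rfl fun m hm => ?_
    rw [ENNReal.toReal_sum (fun l _ => ENNReal.mul_ne_top (by simp) (Mo_fin m l)),
      Finset.mul_sum, Finset.mul_sum, Finset.mul_sum]
    refine Finset.sum_congr rfl fun l hl => ?_
    rw [ENNReal.toReal_mul, ENNReal.toReal_ofReal (by positivity), ENNReal.toReal_natCast]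
    have hm' := Finset.mem_range.1 hm
    have hl' := Finset.mem_range.1 hl
    have p1 : (0 : ℝ) < ((N + 1 + k).choose (m + l) : ℝ) := by
      exact_mod_cast Nat.choose_pos (by omega)
    simp only [Nat.add_sub_cancel]
    push_cast
    have q1 : (N : ℝ) + k + 1 ≠ 0 := by positivity
    have q2 : (N : ℝ) + 1 + k ≠ 0 := by positivity
    have q3 : (N : ℝ) + 1 + k + 1 ≠ 0 := by positivity
    field_simp
    ring
  · intro m _
    rw [ENNReal.sum_ne_top]
    intro l _
    exact ENNReal.mul_ne_top (by simp) (Mo_fin m l)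

/-- recurrence for the moments `E[V_n^k]`, `n ≥ 1`, `k ≥ 0`. -/
theorem stmt7 (n k : ℕ) (hn : 1 ≤ n) :
    ∫ ω, (V n ω) ^ k ∂ P n
      = 2 * (n : ℝ) / (((n : ℝ) + k) * ((n : ℝ) + k + 1)) *
        ∑ l ∈ Finset.range (k + 1), ∑ m ∈ Finset.range n,
          ((n - 1).choose m : ℝ) * (k.choose l : ℝ) / ((n + k).choose (m + l) : ℝ) *
            ∫ ω, (V m ω) ^ l ∂ P m := by
  exact aux_final n k hn

end
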